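/- arXiv:2106.06864 — 6 statements merged into one kernel-verified Lean document; each statement's English description precedes it below -/
import Mathlib

section
/- Let n ≥ 3 and let v = (v_1,…,v_n) be a vector of nonnegative integers with v_1 ≥ 1, v_n ≥ 1 and v_1 + v_2 + ⋯ + v_n odd. Then N_n(v) = N_n(v − e_1 − e_2) + N_n(v − e_n) + Σ_{u ∈ ℕ^{n−2}, Σu odd} N_{n−2}(u) · N_n(v − ū − e_1) + Σ_{u ∈ ℕ^{n−2}, u ≠ 0, Σu even} N_{n−2}(u) · N_n(v − ū − e_n), where e_k is the k-th standard basis vector of ℤ^n, ū = (0, u_1, …, u_{n−2}, 0) ∈ ℤ^n, and each sum has only finitely many nonzero terms (terms with a negative entry in the argument vanish by convention). -/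
/-- A word (list over `ℕ`) is down-up alternating if `w 1 > w 2 < w 3 > w 4 < ⋯`
(1-indexed). -/
def DownUpAlt (w : List ℕ) : Prop :=
  ∀ k : ℕ, k + 1 < w.length →
    if k % 2 = 0 then w.getD (k + 1) 0 < w.getD k 0 else w.getD k 0 < w.getD (k + 1) 0

/-- `NVec n v` is the number of down-up alternating words over `{1,…,n}` that are
empty or have first letter `≥ 2`, and in which letter `i` occurs exactly `v i`
times (it is `0` if some entry of `v` is negative). -/
noncomputable def NVec (n : ℕ) (v : Fin n → ℤ) : ℕ :=
  Nat.card {w : List ℕ // (∀ x ∈ w, 1 ≤ x ∧ x ≤ n) ∧ DownUpAlt w ∧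
    (w = [] ∨ 2 ≤ w.headI) ∧ ∀ i : Fin n, (w.count ((i : ℕ) + 1) : ℤ) = v i}

/-- `AltFrom k w` says that the letters of `w` alternate when its first letter sits at
position `k`: the letters at even positions are peaks, those at odd positions valleys. -/
def AltFrom : ℕ → List ℕ → Prop
  | _, [] => True
  | k, x :: l => (∀ y ∈ l.head?, if k % 2 = 0 then y < x else x < y) ∧ AltFrom (k + 1) l

theorem altFrom_congr {k k' : ℕ} (h : k % 2 = k' % 2) (w : List ℕ) :
    AltFrom k w ↔ AltFrom k' w := by
  induction w generalizing k k' with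
  | nil => simp [AltFrom]
  | cons x l ih => simp only [AltFrom, h, ih (show (k + 1) % 2 = (k' + 1) % 2 by omega)]

theorem altFrom_iff_getD (k : ℕ) (w : List ℕ) :
    AltFrom k w ↔ ∀ j : ℕ, j + 1 < w.length →
      if (k + j) % 2 = 0 then w.getD (j + 1) 0 < w.getD j 0
      else w.getD j 0 < w.getD (j + 1) 0 := by
  induction w generalizing k with
  | nil => simp [AltFrom]
  | cons x l ih =>
    rw [AltFrom, ih]
    constructor
    · rintro ⟨h0, h⟩ j hj
      cases j with
      | zero => cases l with
        | nil => simp at hj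
        | cons y l => simpa using h0 y (by simp)
      | succ j =>
        have := h j (by simpa using hj)
        rw [show k + 1 + j = k + (j + 1) by omega] at this
        simpa using this
    · intro h
      refine ⟨fun y hy => ?_, fun j hj => ?_⟩
      · cases l with
        | nil => simp at hy
        | cons z l =>
          obtain rfl : z = y := by simpa using hy
          simpa using h 0 (by simp)
      · have := h (j + 1) (by simpa using hj)
        rw [show k + 1 + j = k + (j + 1) by omega]
        simpa using this

theorem downUpAlt_iff_altFrom (w : List ℕ) : DownUpAlt w ↔ AltFrom 0 w := by
  simp [altFrom_iff_getD, DownUpAlt]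

/-- Words can be glued at a letter `x` which is extreme, in the direction prescribed by its
position, among the letters before it. -/
theorem altFrom_append_cons {k x : ℕ} {a : List ℕ} (b : List ℕ)
    (h : ∀ y ∈ a, if (k + a.length) % 2 = 0 then y < x else x < y) :
    AltFrom k (a ++ x :: b) ↔ AltFrom k a ∧ AltFrom (k + a.length) (x :: b) := by
  induction a generalizing k with
  | nil => simp [AltFrom]
  | cons y a ih =>
    have hlen : k + (y :: a).length = k + 1 + a.length := by simp; omega
    rw [hlen] at h ⊢
    rw [List.cons_append, AltFrom, AltFrom,
      ih (fun z hz => h z (List.mem_cons_of_mem _ hz)), and_assoc]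
    refine and_congr_left fun _ => ?_
    cases a with
    | nil =>
      have := h y (by simp)
      simp only [List.length_nil] at this
      simp only [List.nil_append, List.head?_cons, List.head?_nil, Option.mem_def,
        Option.some.injEq, forall_eq', reduceCtorEq, false_implies, implies_true, iff_true]
      split_ifs at this ⊢ <;> omega
    | cons z a => simp

/-- A letter of an alternating word which is not the only one has a neighbour on the side
prescribed by its position. -/
theorem AltFrom.exists_neighbour {k x : ℕ} {a b : List ℕ} (h : AltFrom k (a ++ x :: b))
    (hab : a ≠ [] ∨ b ≠ []) :
    ∃ y ∈ a ++ b, if (k + a.length) % 2 = 0 then y < x else x < y := by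
  induction a generalizing k with
  | nil =>
    cases b with
    | nil => simp at hab
    | cons y b => exact ⟨y, by simp, by simpa using h.1 y (by simp)⟩
  | cons y a ih =>
    have hlen : k + (y :: a).length = k + 1 + a.length := by simp; omega
    rw [hlen]
    cases a with
    | nil =>
      refine ⟨y, by simp, ?_⟩
      have := h.1 x (by simp)
      simp only [List.length_nil]
      split_ifs at this ⊢ <;> omega
    | cons z a =>
      obtain ⟨t, ht, hlt⟩ := ih h.2 (by simp)
      exact ⟨t, by simp at ht ⊢; tauto, hlt⟩

theorem altFrom_concat (k x : ℕ) (a : List ℕ) :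
    AltFrom k (a ++ [x]) ↔ AltFrom k a ∧
      ∀ y ∈ a.getLast?, if (k + a.length) % 2 = 0 then y < x else x < y := by
  induction a generalizing k with
  | nil => simp [AltFrom]
  | cons y a ih =>
    have hlen : k + (y :: a).length = k + 1 + a.length := by simp; omega
    rw [hlen, List.cons_append, AltFrom, AltFrom, ih]
    cases a with
    | nil =>
      simp only [List.nil_append, List.head?_cons, Option.mem_some_iff, forall_eq', AltFrom,
        List.getLast?_singleton, List.length_nil, List.head?_nil, List.getLast?_nil]
      simp only [Option.mem_def, reduceCtorEq, false_implies, implies_true, and_true, true_and]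
      split_ifs <;> omega
    | cons z a => simp [and_assoc, List.getLast?_cons_cons]

theorem altFrom_reverse (k : ℕ) (w : List ℕ) :
    AltFrom k w.reverse ↔ AltFrom (k + w.length + 1) w := by
  induction w generalizing k with
  | nil => simp [AltFrom]
  | cons x l ih =>
    rw [List.reverse_cons, altFrom_concat, ih, AltFrom, and_comm]
    refine and_congr ?_ (altFrom_congr (by simp; omega) l)
    rw [List.getLast?_reverse]
    refine forall₂_congr fun y _ => ?_
    rw [List.length_reverse, List.length_cons,
      show (k + (l.length + 1) + 1) % 2 = (k + l.length) % 2 by omega]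

theorem altFrom_map_succ (k : ℕ) (w : List ℕ) :
    AltFrom k (w.map Nat.succ) ↔ AltFrom k w := by
  induction w generalizing k with
  | nil => simp [AltFrom]
  | cons x l ih =>
    rw [List.map_cons, AltFrom, AltFrom, ih]
    cases l <;> simp

theorem sum_count_eq_length {n : ℕ} {w : List ℕ} (h : ∀ x ∈ w, 1 ≤ x ∧ x ≤ n) :
    ∑ i : Fin n, w.count ((i : ℕ) + 1) = w.length := by
  induction w with
  | nil => simp
  | cons x l ih =>
    have hx := h x (by simp)
    simp only [List.count_cons, Finset.sum_add_distrib, List.length_cons,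
      ih fun y hy => h y (List.mem_cons_of_mem _ hy)]
    rw [Finset.sum_eq_single ⟨x - 1, by omega⟩]
    · simp; omega
    · intro i _ hi
      have : x ≠ (i : ℕ) + 1 := fun e => hi (Fin.ext (by simp [e]))
      simp [this]
    · simp

/-- The words counted by `NVec n z`. -/
def wordsOf (n : ℕ) (z : Fin n → ℤ) : Set (List ℕ) :=
  {w | (∀ x ∈ w, 1 ≤ x ∧ x ≤ n) ∧ DownUpAlt w ∧ (w = [] ∨ 2 ≤ w.headI) ∧
    ∀ i : Fin n, (w.count ((i : ℕ) + 1) : ℤ) = z i}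

theorem NVec_eq_ncard (n : ℕ) (z : Fin n → ℤ) : NVec n z = (wordsOf n z).ncard := rfl

theorem mem_wordsOf {n : ℕ} {z : Fin n → ℤ} {w : List ℕ} :
    w ∈ wordsOf n z ↔ (∀ x ∈ w, 1 ≤ x ∧ x ≤ n) ∧ AltFrom 0 w ∧ (w = [] ∨ 2 ≤ w.headI) ∧
      ∀ i : Fin n, (w.count ((i : ℕ) + 1) : ℤ) = z i := by
  rw [← downUpAlt_iff_altFrom]; rfl

theorem finite_wordsOf (n : ℕ) (z : Fin n → ℤ) : (wordsOf n z).Finite := by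
  rcases (wordsOf n z).eq_empty_or_nonempty with h | ⟨w₀, h₀⟩
  · simp [h]
  · refine (List.finite_toSet w₀.permutations).subset fun w hw => ?_
    rw [Set.mem_ofPred_eq, List.mem_permutations, List.perm_iff_count]
    intro x
    by_cases hx : 1 ≤ x ∧ x ≤ n
    · have e := (hw.2.2.2 ⟨x - 1, by omega⟩).trans (h₀.2.2.2 ⟨x - 1, by omega⟩).symm
      simpa [Nat.sub_add_cancel hx.1] using e
    · rw [List.count_eq_zero_of_not_mem fun h => hx (hw.1 x h),
        List.count_eq_zero_of_not_mem fun h => hx (h₀.1 x h)]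

/-- Counting pairs along a statistic `κ` of the first component. -/
theorem ncard_pairs_eq_finsum {α β U : Type*} (S : Set U) (F : U → Set α) (G : U → Set β)
    (κ : α → U) (hF : ∀ u, ∀ a ∈ F u, κ a = u)
    (hfin : {p : α × β | κ p.1 ∈ S ∧ p.1 ∈ F (κ p.1) ∧ p.2 ∈ G (κ p.1)}.Finite) :
    {p : α × β | κ p.1 ∈ S ∧ p.1 ∈ F (κ p.1) ∧ p.2 ∈ G (κ p.1)}.ncard =
      ∑ᶠ u ∈ S, (F u).ncard * (G u).ncard := by
  classical
  rw [Set.ncard_eq_toFinset_card _ hfin,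
    Finset.card_eq_sum_card_image (fun p : α × β => κ p.1)]
  have hfib : ∀ u ∈ S, ((hfin.toFinset.filter fun p => κ p.1 = u : Finset (α × β)) :
      Set (α × β)) = F u ×ˢ G u := by
    intro u hu
    ext ⟨a, b⟩
    simp only [Finset.coe_filter, Set.Finite.mem_toFinset, Set.mem_ofPred_eq, Set.mem_prod]
    constructor
    · rintro ⟨⟨-, ha, hb⟩, rfl⟩
      exact ⟨ha, hb⟩
    · rintro ⟨ha, hb⟩
      obtain rfl := hF u a ha
      exact ⟨⟨hu, ha, hb⟩, rfl⟩
  rw [finsum_mem_eq_sum_of_inter_support_eq (t := hfin.toFinset.image fun p => κ p.1)]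
  · refine Finset.sum_congr rfl fun u hu => ?_
    have huS : u ∈ S := by
      obtain ⟨p, hp, rfl⟩ := Finset.mem_image.1 hu
      exact (hfin.mem_toFinset.1 hp).1
    rw [← Set.ncard_coe_finset, hfib u huS, Set.ncard_prod]
  · ext u
    refine and_congr_left fun hu => ⟨fun huS => ?_, fun hu' => ?_⟩
    · rw [Function.mem_support, ← Set.ncard_prod, ← hfib u huS] at hu
      obtain ⟨p, hp⟩ := Set.nonempty_of_ncard_ne_zero hu
      have hp := Finset.mem_filter.1 hp
      exact Finset.mem_image.2 ⟨p, hp.1, hp.2⟩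
    · obtain ⟨p, hp, rfl⟩ := Finset.mem_image.1 hu'
      exact (hfin.mem_toFinset.1 hp).1

/-- The first occurrence of a letter satisfying `p` determines the splitting of a word. -/
theorem append_cons_inj_of_first {α : Type*} {p : α → Prop} {a a' b b' : List α} {x x' : α}
    (ha : ∀ y ∈ a, ¬ p y) (ha' : ∀ y ∈ a', ¬ p y) (hx : p x) (hx' : p x')
    (h : a ++ x :: b = a' ++ x' :: b') : a = a' ∧ x = x' ∧ b = b' := by
  induction a generalizing a' with
  | nil =>
    cases a' with
    | nil => simpa using h
    | cons y' a' =>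
      simp only [List.nil_append, List.cons_append, List.cons.injEq] at h
      exact absurd (h.1 ▸ hx) (ha' y' (by simp))
  | cons y a ih =>
    cases a' with
    | nil =>
      simp only [List.nil_append, List.cons_append, List.cons.injEq] at h
      exact absurd (h.1 ▸ hx') (ha y (by simp))
    | cons y' a' =>
      simp only [List.cons_append, List.cons.injEq] at h
      have := ih (fun z hz => ha z (by simp [hz])) (fun z hz => ha' z (by simp [hz])) h.2
      simp [h.1, this]

theorem exists_first_split {α : Type*} {p : α → Prop} {w : List α} (h : ∃ x ∈ w, p x) :
    ∃ a x b, w = a ++ x :: b ∧ p x ∧ ∀ y ∈ a, ¬ p y := by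
  induction w with
  | nil => simp at h
  | cons y w ih =>
    by_cases hy : p y
    · exact ⟨[], y, w, rfl, hy, by simp⟩
    · obtain ⟨a, x, b, rfl, hx, ha⟩ := ih (by simpa [hy] using h)
      exact ⟨y :: a, x, b, rfl, hx, by simpa [hy] using ha⟩

/-- A word over `{2,…,n-1}` followed by the letter `1`. -/
theorem mem_wordsOf_append_one {n : ℕ} {i₀ : Fin n} (hi₀ : (i₀ : ℕ) = 0) {z : Fin n → ℤ}
    {a b : List ℕ}
    (ha : ∀ y ∈ a, 2 ≤ y ∧ y ≤ n - 1) (hodd : Odd a.length) :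
    a ++ 1 :: b ∈ wordsOf n z ↔ AltFrom 0 a ∧ b ∈ wordsOf n (fun i =>
      z i - (a.count ((i : ℕ) + 1) : ℤ) - (Pi.single i₀ 1 : Fin n → ℤ) i) := by
  rw [mem_wordsOf, mem_wordsOf, altFrom_append_cons]
  swap
  · intro y hy
    have := ha y hy
    rw [if_neg (by have := Nat.odd_iff.1 hodd; omega)]
    omega
  have h1 : (∀ x ∈ a ++ 1 :: b, 1 ≤ x ∧ x ≤ n) ↔ ∀ x ∈ b, 1 ≤ x ∧ x ≤ n := by
    constructor
    · intro h x hx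
      exact h x (by simp [hx])
    · intro h x hx
      rcases List.mem_append.1 hx with hx | hx
      · have := ha x hx; omega
      · rcases List.mem_cons.1 hx with rfl | hx
        · omega
        · exact h x hx
  have h2 : AltFrom (0 + a.length) (1 :: b) ↔ (b = [] ∨ 2 ≤ b.headI) ∧ AltFrom 0 b := by
    have := Nat.odd_iff.1 hodd
    rw [AltFrom, altFrom_congr (k' := 0) (by omega)]
    refine and_congr_left fun _ => ?_
    cases b <;> simp [this]
    omega
  have h3 : a ++ 1 :: b = [] ∨ 2 ≤ (a ++ 1 :: b).headI := by
    cases a with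
    | nil => simp at hodd
    | cons y a => exact Or.inr (ha y (by simp)).1
  have h4 : (∀ i : Fin n, ((a ++ 1 :: b).count ((i : ℕ) + 1) : ℤ) = z i) ↔
      ∀ i : Fin n, (b.count ((i : ℕ) + 1) : ℤ) =
        z i - (a.count ((i : ℕ) + 1) : ℤ) - (Pi.single i₀ 1 : Fin n → ℤ) i := by
    refine forall_congr' fun i => ?_
    by_cases hi : i = i₀
    · simp [hi, hi₀]
      omega
    · have hi' : (i : ℕ) ≠ 0 := fun e => hi (Fin.ext (e.trans hi₀.symm))
      simp [Pi.single_eq_of_ne hi, hi']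
      omega
  rw [h1, h2, h4]
  tauto

/-- A word of even length over `{2,…,n-1}` followed by the letter `n`. -/
theorem mem_wordsOf_append_top {n : ℕ} (hn : 2 ≤ n) {i₁ : Fin n} (hi₁ : (i₁ : ℕ) = n - 1)
    {z : Fin n → ℤ} {a b : List ℕ}
    (ha : ∀ y ∈ a, 2 ≤ y ∧ y ≤ n - 1) (heven : Even a.length) (hz : Odd (∑ i, z i)) :
    a ++ n :: b.reverse ∈ wordsOf n z ↔ AltFrom 0 a ∧ b ∈ wordsOf n (fun i =>
      z i - (a.count ((i : ℕ) + 1) : ℤ) - (Pi.single i₁ 1 : Fin n → ℤ) i) := by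
  have ha2 := Nat.even_iff.1 heven
  rw [mem_wordsOf, mem_wordsOf, altFrom_append_cons]
  swap
  · intro y hy
    have := ha y hy
    rw [if_pos (by omega)]
    omega
  have h1 : (∀ x ∈ a ++ n :: b.reverse, 1 ≤ x ∧ x ≤ n) ↔ ∀ x ∈ b, 1 ≤ x ∧ x ≤ n := by
    constructor
    · intro h x hx
      exact h x (by simp [hx])
    · intro h x hx
      rcases List.mem_append.1 hx with hx | hx
      · have := ha x hx; omega
      · rcases List.mem_cons.1 hx with rfl | hx
        · omega
        · exact h x (by simpa using hx)
  have h4 : (∀ i : Fin n, ((a ++ n :: b.reverse).count ((i : ℕ) + 1) : ℤ) = z i) ↔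
      ∀ i : Fin n, (b.count ((i : ℕ) + 1) : ℤ) =
        z i - (a.count ((i : ℕ) + 1) : ℤ) - (Pi.single i₁ 1 : Fin n → ℤ) i := by
    refine forall_congr' fun i => ?_
    by_cases hi : i = i₁
    · simp [hi, hi₁, Nat.sub_add_cancel (show 1 ≤ n by omega)]
      omega
    · have hne : n ≠ (i : ℕ) + 1 := fun e => hi (Fin.ext (by omega))
      simp [Pi.single_eq_of_ne hi, hne]
      omega
  rw [h1, ← h4]
  have hb : (∀ x ∈ b, 1 ≤ x ∧ x ≤ n) →
      (∀ i : Fin n, ((a ++ n :: b.reverse).count ((i : ℕ) + 1) : ℤ) = z i) →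
      b.length % 2 = 0 := by
    intro hl hc
    have := sum_count_eq_length (h1.2 hl)
    simp only [← hc] at hz
    rw [← Nat.cast_sum, this] at hz
    have := Nat.odd_iff.1 (by exact_mod_cast hz)
    simp at this
    omega
  have key : (∀ x ∈ b, 1 ≤ x ∧ x ≤ n) → b.length % 2 = 0 →
      (AltFrom (0 + a.length) (n :: b.reverse) ↔ AltFrom 0 b) ∧
      (AltFrom 0 b → b = [] ∨ 2 ≤ b.headI) := by
    intro hl hlen
    have hrev : AltFrom 1 b.reverse ↔ AltFrom 0 b := by
      rw [altFrom_reverse, altFrom_congr (k' := 0) (by omega)]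
    constructor
    · rw [AltFrom, altFrom_congr (k' := 1) (by omega), ← hrev]
      refine and_iff_right_of_imp fun h y hy => ?_
      rw [if_pos (by omega)]
      have hlr : ∀ x ∈ b.reverse, x ≤ n := fun x hx => (hl x (by simpa using hx)).2
      rw [← List.length_reverse] at hlen
      rcases hbr : b.reverse with _ | ⟨s, _ | ⟨t, l⟩⟩
      · simp [hbr] at hy
      · simp [hbr] at hlen
      · rw [hbr] at h hy hlr
        obtain rfl : s = y := by simpa using hy
        have h' := h.1 t (by simp)
        have := hlr t (by simp)
        simp at h'
        omega
    · intro h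
      rcases b with _ | ⟨s, _ | ⟨t, l⟩⟩
      · simp
      · simp at hlen
      · have h' := h.1 t (by simp)
        have := hl t (by simp)
        simp at h'
        simp
        omega
  have h3 : a ++ n :: b.reverse = [] ∨ 2 ≤ (a ++ n :: b.reverse).headI := by
    cases a with
    | nil => right; simp; omega
    | cons y a => exact Or.inr (ha y (by simp)).1
  constructor
  · rintro ⟨hl, ⟨hA, hB⟩, -, hc⟩
    have k := key hl (hb hl hc)
    exact ⟨hA, hl, k.1.1 hB, k.2 (k.1.1 hB), hc⟩
  · rintro ⟨hA, hl, hB, -, hc⟩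
    have k := key hl (hb hl hc)
    exact ⟨hl, ⟨hA, k.1.2 hB⟩, h3, hc⟩

/-- The numbers of occurrences of the letters `1,…,m`. -/
def letterCounts (m : ℕ) (a : List ℕ) : Fin m → ℕ := fun j => a.count ((j : ℕ) + 1)

theorem letterCounts_eq_of_mem_wordsOf {m : ℕ} {u : Fin m → ℕ} {a : List ℕ}
    (h : a ∈ wordsOf m (fun i => (u i : ℤ))) : letterCounts m a = u :=
  funext fun i => Nat.cast_injective (h.2.2.2 i)

theorem count_map_succ {n : ℕ} {a : List ℕ} (ha : ∀ x ∈ a, 1 ≤ x ∧ x ≤ n - 2) (i : Fin n) :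
    ((a.map Nat.succ).count ((i : ℕ) + 1) : ℤ) =
      if 1 ≤ (i : ℕ) ∧ (i : ℕ) ≤ n - 2 then (a.count (i : ℕ) : ℤ) else 0 := by
  rw [← Nat.succ_eq_add_one, List.count_map_of_injective _ _ Nat.succ_injective]
  split_ifs with h
  · rfl
  · exact_mod_cast List.count_eq_zero_of_not_mem fun hi => h (ha _ hi)

theorem map_succ_of_mem_wordsOf {n : ℕ} {z : Fin (n - 2) → ℤ} {a : List ℕ}
    (h : a ∈ wordsOf (n - 2) z) :
    (∀ y ∈ a.map Nat.succ, 2 ≤ y ∧ y ≤ n - 1) ∧ AltFrom 0 (a.map Nat.succ) ∧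
      a.map Nat.succ ≠ [2] := by
  rw [mem_wordsOf] at h
  refine ⟨fun y hy => ?_, (altFrom_map_succ 0 a).2 h.2.1, fun e => ?_⟩
  · obtain ⟨x, hx, rfl⟩ := List.mem_map.1 hy
    have := h.1 x hx
    omega
  · obtain ⟨x, rfl, hx⟩ := List.map_eq_singleton_iff.1 e
    have := h.2.2.1
    simp at this
    omega

theorem exists_map_succ_eq {n : ℕ} {a : List ℕ} (ha : ∀ y ∈ a, 2 ≤ y ∧ y ≤ n - 1)
    (halt : AltFrom 0 a) (h2 : a ≠ [2]) :
    ∃ a', a = a'.map Nat.succ ∧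
      a' ∈ wordsOf (n - 2) (fun i => (letterCounts (n - 2) a' i : ℤ)) := by
  have e : a = (a.map Nat.pred).map Nat.succ := by
    rw [List.map_map]
    refine (List.map_id a).symm.trans (List.map_congr_left fun y hy => ?_)
    have := ha y hy
    simp; omega
  refine ⟨a.map Nat.pred, e, mem_wordsOf.2 ⟨fun x hx => ?_, ?_, ?_, fun i => rfl⟩⟩
  · obtain ⟨y, hy, rfl⟩ := List.mem_map.1 hx
    have := ha y hy
    simp; omega
  · rwa [← altFrom_map_succ, ← e]
  · rcases a with _ | ⟨s, _ | ⟨t, l⟩⟩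
    · simp
    · have := ha s (by simp)
      simp at h2 ⊢
      omega
    · have := ha t (by simp)
      have h' := halt.1 t (by simp)
      simp at h' ⊢
      omega

/-- In a word counted by `NVec`, a letter `1` sits at a valley. -/
theorem odd_length_of_mem_wordsOf {n : ℕ} {z : Fin n → ℤ} {a b : List ℕ}
    (h : a ++ 1 :: b ∈ wordsOf n z) : Odd a.length := by
  rw [mem_wordsOf] at h
  rw [← Nat.not_even_iff_odd, Nat.even_iff]
  intro heven
  by_cases hab : a ≠ [] ∨ b ≠ []
  · obtain ⟨y, hy, hlt⟩ := h.2.1.exists_neighbour hab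
    rw [if_pos (by omega)] at hlt
    have := h.1 y (by simp at hy ⊢; tauto)
    omega
  · push Not at hab
    have := h.2.2.1
    simp [hab.1] at this

/-- In a word counted by `NVec`, a letter `n` sits at a peak. -/
theorem even_length_of_mem_wordsOf {n : ℕ} {z : Fin n → ℤ} {a b : List ℕ}
    (h : a ++ n :: b ∈ wordsOf n z) : Even a.length := by
  rw [mem_wordsOf] at h
  rw [← Nat.not_odd_iff_even, Nat.odd_iff]
  intro hodd
  obtain ⟨y, hy, hlt⟩ := h.2.1.exists_neighbour (Or.inl (by rintro rfl; simp at hodd))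
  rw [if_neg (by omega)] at hlt
  have := h.1 y (by simp at hy ⊢; tauto)
  omega

theorem stmt5 (n : ℕ) (hn : 3 ≤ n) (v : Fin n → ℕ)
    (h1 : 1 ≤ v ⟨0, by omega⟩) (hlast : 1 ≤ v ⟨n - 1, by omega⟩)
    (hodd : Odd (∑ i, v i)) :
    NVec n (fun i => (v i : ℤ)) =
      NVec n ((fun i => (v i : ℤ)) - Pi.single ⟨0, by omega⟩ 1 - Pi.single ⟨1, by omega⟩ 1)
      + NVec n ((fun i => (v i : ℤ)) - Pi.single ⟨n - 1, by omega⟩ 1)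
      + ∑ᶠ u ∈ {u : Fin (n - 2) → ℕ | Odd (∑ i, u i)},
          NVec (n - 2) (fun i => (u i : ℤ)) *
            NVec n ((fun i => (v i : ℤ))
              - (fun i : Fin n => if h : 1 ≤ (i : ℕ) ∧ (i : ℕ) ≤ n - 2 then
                  (u ⟨(i : ℕ) - 1, by omega⟩ : ℤ) else 0)
              - Pi.single ⟨0, by omega⟩ 1)
      + ∑ᶠ u ∈ {u : Fin (n - 2) → ℕ | u ≠ 0 ∧ Even (∑ i, u i)},
          NVec (n - 2) (fun i => (u i : ℤ)) *
            NVec n ((fun i => (v i : ℤ))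
              - (fun i : Fin n => if h : 1 ≤ (i : ℕ) ∧ (i : ℕ) ≤ n - 2 then
                  (u ⟨(i : ℕ) - 1, by omega⟩ : ℤ) else 0)
              - Pi.single ⟨n - 1, by omega⟩ 1) := by
  have hfirst : ((⟨0, by omega⟩ : Fin n) : ℕ) = 0 := rfl
  have htop : ((⟨n - 1, by omega⟩ : Fin n) : ℕ) = n - 1 := rfl
  set z : Fin n → ℤ := fun i => (v i : ℤ) with hz
  have hzodd : Odd (∑ i, z i) := by
    rw [hz, ← Nat.cast_sum]; exact_mod_cast hodd
  let bar : (Fin (n - 2) → ℕ) → Fin n → ℤ := fun u i =>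
    if h : 1 ≤ (i : ℕ) ∧ (i : ℕ) ≤ n - 2 then (u ⟨(i : ℕ) - 1, by omega⟩ : ℤ) else 0
  let pairs : Set (Fin (n - 2) → ℕ) → (Fin n → ℤ) → Set (List ℕ × List ℕ) := fun S e =>
    {p | letterCounts (n - 2) p.1 ∈ S ∧
      p.1 ∈ wordsOf (n - 2) (fun i => (letterCounts (n - 2) p.1 i : ℤ)) ∧
      p.2 ∈ wordsOf n (z - bar (letterCounts (n - 2) p.1) - e)}
  have hbar : ∀ a : List ℕ, (∀ x ∈ a, 1 ≤ x ∧ x ≤ n - 2) → ∀ e : Fin n → ℤ,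
      (fun i : Fin n => z i - ((a.map Nat.succ).count ((i : ℕ) + 1) : ℤ) - e i) =
        z - bar (letterCounts (n - 2) a) - e := fun a ha e => funext fun i => by
    rw [count_map_succ ha]
    by_cases hi : 1 ≤ (i : ℕ) ∧ (i : ℕ) ≤ n - 2
    · simp [bar, hi, letterCounts]
    · simp [bar, hi]
  have htwo : (fun i : Fin n => z i - ([2].count ((i : ℕ) + 1) : ℤ) -
      (Pi.single ⟨0, by omega⟩ 1 : Fin n → ℤ) i) =
      z - Pi.single ⟨0, by omega⟩ 1 - Pi.single ⟨1, by omega⟩ 1 := by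
    funext i
    by_cases hi : (i : ℕ) = 1
    · have hi' : i = ⟨1, by omega⟩ := Fin.ext hi
      simp [hi']
    · have hi' : i ≠ ⟨1, by omega⟩ := fun e => hi (by rw [e])
      simp [Pi.single_eq_of_ne hi', hi]
  have hnil : (fun i : Fin n => z i - (([] : List ℕ).count ((i : ℕ) + 1) : ℤ) -
      (Pi.single ⟨n - 1, by omega⟩ 1 : Fin n → ℤ) i) = z - Pi.single ⟨n - 1, by omega⟩ 1 := by
    funext i; simp
  have hlen : ∀ a : List ℕ,
      a ∈ wordsOf (n - 2) (fun i => (letterCounts (n - 2) a i : ℤ)) →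
      ∑ i, letterCounts (n - 2) a i = a.length := fun a ha => sum_count_eq_length ha.1
  -- the splittings of the words counted on the left at their first letter `1` or `n`
  let join : List ℕ × ℕ × List ℕ → List ℕ := fun q => q.1 ++ q.2.1 :: q.2.2
  let A := wordsOf n (z - Pi.single ⟨0, by omega⟩ 1 - Pi.single ⟨1, by omega⟩ 1)
  let B := wordsOf n (z - Pi.single ⟨n - 1, by omega⟩ 1)
  let C := pairs {u | Odd (∑ i, u i)} (Pi.single ⟨0, by omega⟩ 1)
  let D := pairs {u | u ≠ 0 ∧ Even (∑ i, u i)} (Pi.single ⟨n - 1, by omega⟩ 1)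
  let fA : List ℕ → List ℕ × ℕ × List ℕ := fun b => ([2], 1, b)
  let fB : List ℕ → List ℕ × ℕ × List ℕ := fun b => ([], n, b.reverse)
  let fC : List ℕ × List ℕ → List ℕ × ℕ × List ℕ := fun p => (p.1.map Nat.succ, 1, p.2)
  let fD : List ℕ × List ℕ → List ℕ × ℕ × List ℕ := fun p => (p.1.map Nat.succ, n, p.2.reverse)
  have hfA : fA.Injective := fun b b' h => by simpa [fA] using h
  have hfB : fB.Injective := fun b b' h => by simpa [fB] using h
  have hsucc : Function.Injective (List.map Nat.succ) :=
    List.map_injective_iff.2 Nat.succ_injective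
  have hfC : fC.Injective := fun p p' h => by
    simp only [fC, Prod.mk.injEq] at h
    exact Prod.ext (hsucc h.1) h.2.2
  have hfD : fD.Injective := fun p p' h => by
    simp only [fD, Prod.mk.injEq, true_and, List.reverse_inj] at h
    exact Prod.ext (hsucc h.1) h.2
  have hsplit : ∀ q ∈ fA '' A ∪ fB '' B ∪ fC '' C ∪ fD '' D,
      (∀ y ∈ q.1, ¬ (y = 1 ∨ y = n)) ∧ (q.2.1 = 1 ∨ q.2.1 = n) ∧ join q ∈ wordsOf n z := by
    have hinner : ∀ a : List ℕ, (∀ y ∈ a, 2 ≤ y ∧ y ≤ n - 1) →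
        ∀ y ∈ a, ¬ (y = 1 ∨ y = n) := fun a ha y hy => by
      have := ha y hy; omega
    have h2 : ∀ y ∈ [2], 2 ≤ y ∧ y ≤ n - 1 := by
      intro y hy
      rw [List.mem_singleton.1 hy]; omega
    rintro q (((⟨b, hb, rfl⟩ | ⟨b, hb, rfl⟩) | ⟨⟨a, b⟩, ⟨hS, ha, hb⟩, rfl⟩) |
      ⟨⟨a, b⟩, ⟨hS, ha, hb⟩, rfl⟩)
    · refine ⟨hinner _ h2, Or.inl rfl, (mem_wordsOf_append_one hfirst h2 (by simp)).2 ⟨?_, ?_⟩⟩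
      · simp [AltFrom]
      · rw [htwo]; exact hb
    · refine ⟨by simp [fB], Or.inr rfl,
        (mem_wordsOf_append_top (a := []) (by omega) htop (by simp) (by simp) hzodd).2 ⟨trivial, ?_⟩⟩
      rw [hnil]; exact hb
    · obtain ⟨hl, halt, -⟩ := map_succ_of_mem_wordsOf ha
      refine ⟨hinner _ hl, Or.inl rfl, (mem_wordsOf_append_one hfirst hl ?_).2 ⟨halt, ?_⟩⟩
      · rw [List.length_map, ← hlen a ha]; exact hS
      · rw [hbar a ha.1]; exact hb
    · obtain ⟨hl, halt, -⟩ := map_succ_of_mem_wordsOf ha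
      refine ⟨hinner _ hl, Or.inr rfl, (mem_wordsOf_append_top (by omega) htop hl ?_ hzodd).2 ⟨halt, ?_⟩⟩
      · rw [List.length_map, ← hlen a ha]; exact hS.2
      · rw [hbar a ha.1]; exact hb
  have hinj : Set.InjOn join (fA '' A ∪ fB '' B ∪ fC '' C ∪ fD '' D) := fun q hq q' hq' h => by
    obtain ⟨e1, e2, e3⟩ := append_cons_inj_of_first (p := fun y => y = 1 ∨ y = n)
      (hsplit q hq).1 (hsplit q' hq').1 (hsplit q hq).2.1 (hsplit q' hq').2.1 h
    exact Prod.ext e1 (Prod.ext e2 e3)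
  have himage : join '' (fA '' A ∪ fB '' B ∪ fC '' C ∪ fD '' D) = wordsOf n z := by
    refine Set.Subset.antisymm ?_ fun w hw => ?_
    · rintro _ ⟨q, hq, rfl⟩
      exact (hsplit q hq).2.2
    have hone : 1 ∈ w := by
      have := hw.2.2.2 ⟨0, by omega⟩
      rw [← List.count_pos_iff]
      simp [hz] at this
      omega
    obtain ⟨a, x, b, rfl, hx, ha⟩ :=
      exists_first_split (p := fun y => y = 1 ∨ y = n) ⟨1, hone, Or.inl rfl⟩
    have hl : ∀ y ∈ a, 2 ≤ y ∧ y ≤ n - 1 := fun y hy => by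
      have h1 := ha y hy
      have h2 := hw.1 y (by simp [hy])
      omega
    rcases hx with rfl | hx
    · have hpar := odd_length_of_mem_wordsOf hw
      obtain ⟨halt, hb⟩ := (mem_wordsOf_append_one hfirst hl hpar).1 hw
      by_cases h2 : a = [2]
      · subst h2
        rw [htwo] at hb
        exact ⟨_, Or.inl (Or.inl (Or.inl ⟨b, hb, rfl⟩)), rfl⟩
      · obtain ⟨a, rfl, ha'⟩ := exists_map_succ_eq hl halt h2
        rw [hbar a ha'.1] at hb
        rw [List.length_map, ← hlen a ha'] at hpar
        exact ⟨_, Or.inl (Or.inr ⟨(a, b), ⟨hpar, ha', hb⟩, rfl⟩), rfl⟩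
    · obtain rfl : n = x := hx.symm
      have hpar := even_length_of_mem_wordsOf hw
      rw [← b.reverse_reverse] at hw ⊢
      obtain ⟨halt, hb⟩ := (mem_wordsOf_append_top (by omega) htop hl hpar hzodd).1 hw
      by_cases h0 : a = []
      · subst h0
        rw [hnil] at hb
        exact ⟨_, Or.inl (Or.inl (Or.inr ⟨_, hb, rfl⟩)), rfl⟩
      · obtain ⟨a, rfl, ha'⟩ := exists_map_succ_eq hl halt (by rintro rfl; simp at hpar)
        rw [hbar a ha'.1] at hb
        rw [List.length_map, ← hlen a ha'] at hpar
        refine ⟨_, Or.inr ⟨(a, b.reverse), ⟨⟨fun hzero => h0 ?_, hpar⟩, ha', hb⟩, rfl⟩, rfl⟩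
        have := hlen a ha'
        change letterCounts (n - 2) a = 0 at hzero
        rw [hzero] at this
        simpa [eq_comm] using this
  have hfin : (fA '' A ∪ fB '' B ∪ fC '' C ∪ fD '' D).Finite :=
    Set.Finite.of_finite_image (himage ▸ finite_wordsOf n z) hinj
  obtain ⟨hfinABC, hfinD⟩ := Set.finite_union.1 hfin
  obtain ⟨hfinAB, hfinC⟩ := Set.finite_union.1 hfinABC
  obtain ⟨hfinA, hfinB⟩ := Set.finite_union.1 hfinAB
  have hdAB : Disjoint (fA '' A) (fB '' B) := by
    rw [Set.disjoint_left]
    rintro _ ⟨b, -, rfl⟩ ⟨b', -, h⟩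
    simp [fA, fB] at h
  have hdC : Disjoint (fA '' A ∪ fB '' B) (fC '' C) := by
    rw [Set.disjoint_left]
    rintro _ (⟨b, -, rfl⟩ | ⟨b, -, rfl⟩) ⟨p, hp, h⟩
    · simp only [fA, fC, Prod.mk.injEq] at h
      exact (map_succ_of_mem_wordsOf hp.2.1).2.2 h.1
    · simp only [fB, fC, Prod.mk.injEq] at h
      omega
  have hdD : Disjoint (fA '' A ∪ fB '' B ∪ fC '' C) (fD '' D) := by
    rw [Set.disjoint_left]
    rintro _ ((⟨b, -, rfl⟩ | ⟨b, -, rfl⟩) | ⟨p', -, rfl⟩) ⟨p, hp, h⟩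
    · simp only [fA, fD, Prod.mk.injEq] at h
      omega
    · simp only [fB, fD, Prod.mk.injEq, List.map_eq_nil_iff] at h
      exact hp.1.1 (funext fun i => by simp [letterCounts, h.1])
    · simp only [fC, fD, Prod.mk.injEq] at h
      omega
  simp only [NVec_eq_ncard]
  rw [← himage, hinj.ncard_image, Set.ncard_union_eq hdD hfinABC hfinD,
    Set.ncard_union_eq hdC hfinAB hfinC, Set.ncard_union_eq hdAB hfinA hfinB,
    Set.ncard_image_of_injective _ hfA, Set.ncard_image_of_injective _ hfB,
    Set.ncard_image_of_injective _ hfC, Set.ncard_image_of_injective _ hfD]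
  have hcard : ∀ (S : Set (Fin (n - 2) → ℕ)) (e : Fin n → ℤ), (pairs S e).Finite →
      (pairs S e).ncard = ∑ᶠ u ∈ S, (wordsOf (n - 2) (fun i => (u i : ℤ))).ncard *
        (wordsOf n (z - bar u - e)).ncard := fun S e h =>
    ncard_pairs_eq_finsum S (fun u => wordsOf (n - 2) (fun i => (u i : ℤ)))
      (fun u => wordsOf n (z - bar u - e)) (letterCounts (n - 2))
      (fun u a ha => letterCounts_eq_of_mem_wordsOf ha) h
  rw [hcard _ _ (hfinC.of_finite_image hfC.injOn), hcard _ _ (hfinD.of_finite_image hfD.injOn)]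
end

section
/- Let n ≥ 1 and let v = (v_1,…,v_n) be a vector of nonnegative integers with v_1 + v_2 + ⋯ + v_n even. Then N_n(v) = N_n(r(v)), where r(v) = (v_n, v_{n−1}, …, v_1) is the reverse of v. -/
/-- The words counted by `NVec n v`. -/
def IsPlateWord (n : ℕ) (v : Fin n → ℤ) (w : List ℕ) : Prop :=
  (∀ x ∈ w, 1 ≤ x ∧ x ≤ n) ∧ DownUpAlt w ∧
    (w = [] ∨ 2 ≤ w.headI) ∧ ∀ i : Fin n, (w.count ((i : ℕ) + 1) : ℤ) = v i

/-- The reverse of a word with each letter `x` replaced by `n + 1 - x`. -/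
def revCompl (n : ℕ) (w : List ℕ) : List ℕ :=
  (w.map fun x => n + 1 - x).reverse

theorem length_revCompl (n : ℕ) (w : List ℕ) : (revCompl n w).length = w.length := by
  simp [revCompl]

theorem revCompl_revCompl {n : ℕ} {w : List ℕ} (hw : ∀ x ∈ w, 1 ≤ x ∧ x ≤ n) :
    revCompl n (revCompl n w) = w := by
  simp only [revCompl, List.map_reverse, List.reverse_reverse, List.map_map]
  conv_rhs => rw [← List.map_id w]
  refine List.map_congr_left fun x hx => ?_
  have := hw x hx
  simp only [Function.comp, id]
  omega

theorem mem_revCompl_bounds {n : ℕ} {w : List ℕ} (hw : ∀ x ∈ w, 1 ≤ x ∧ x ≤ n) :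
    ∀ x ∈ revCompl n w, 1 ≤ x ∧ x ≤ n := by
  intro x hx
  simp only [revCompl, List.mem_reverse, List.mem_map] at hx
  obtain ⟨y, hy, rfl⟩ := hx
  have := hw y hy
  omega

theorem getD_revCompl {n k : ℕ} {w : List ℕ} (hk : k < w.length) :
    (revCompl n w).getD k 0 = n + 1 - w.getD (w.length - 1 - k) 0 := by
  have h : w.length - 1 - k < w.length := by omega
  simp [revCompl, List.getD, hk, h]

theorem getD_bounds {n k : ℕ} {w : List ℕ} (hw : ∀ x ∈ w, 1 ≤ x ∧ x ≤ n)
    (hk : k < w.length) : 1 ≤ w.getD k 0 ∧ w.getD k 0 ≤ n := by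
  rw [List.getD_eq_getElem _ _ hk]
  exact hw _ (List.getElem_mem hk)

theorem DownUpAlt.revCompl {n : ℕ} {w : List ℕ} (hw : ∀ x ∈ w, 1 ≤ x ∧ x ≤ n)
    (halt : DownUpAlt w) (hlen : Even w.length) : DownUpAlt (revCompl n w) := by
  intro k hk
  rw [length_revCompl] at hk
  rw [getD_revCompl hk, getD_revCompl (by omega : k < w.length)]
  obtain ⟨m, hm⟩ := hlen
  have hstep := halt (w.length - 1 - (k + 1)) (by omega)
  rw [show w.length - 1 - (k + 1) + 1 = w.length - 1 - k by omega] at hstep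
  have h₁ := getD_bounds hw (k := w.length - 1 - (k + 1)) (by omega)
  have h₂ := getD_bounds hw (k := w.length - 1 - k) (by omega)
  by_cases hk2 : k % 2 = 0
  · rw [if_pos (by omega)] at hstep
    rw [if_pos hk2]
    omega
  · rw [if_neg (by omega)] at hstep
    rw [if_neg hk2]
    omega

theorem DownUpAlt.two_le_headI {n : ℕ} {w : List ℕ} (hw : ∀ x ∈ w, 1 ≤ x ∧ x ≤ n)
    (halt : DownUpAlt w) (hlen : Even w.length) : w = [] ∨ 2 ≤ w.headI := by
  match w, hw, halt, hlen with
  | [], _, _, _ => exact Or.inl rfl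
  | [_], _, _, hlen => simp at hlen
  | a :: b :: _, hw, halt, _ =>
    have hab : b < a := by simpa using halt 0 (by simp)
    have hb := hw b (by simp)
    exact Or.inr (show 2 ≤ a by omega)

theorem count_revCompl {n : ℕ} {w : List ℕ} (hw : ∀ x ∈ w, 1 ≤ x ∧ x ≤ n) (i : Fin n) :
    (revCompl n w).count ((i : ℕ) + 1) = w.count ((i.rev : ℕ) + 1) := by
  rw [revCompl, List.count_reverse, List.count, List.count, List.countP_map]
  refine List.countP_congr fun x hx => ?_
  have := hw x hx
  have := i.isLt
  simp only [Function.comp, beq_iff_eq, Fin.val_rev]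
  omega

theorem length_eq_sum_count {n : ℕ} {w : List ℕ} (hw : ∀ x ∈ w, 1 ≤ x ∧ x ≤ n) :
    w.length = ∑ i : Fin n, w.count ((i : ℕ) + 1) := by
  have h := Multiset.sum_count_eq_card (s := Finset.Ico 1 (n + 1)) (m := (w : Multiset ℕ))
    fun x hx => by
      have := hw x (by simpa using hx)
      simp only [Finset.mem_Ico]
      omega
  simp only [Multiset.coe_count, Multiset.coe_card] at h
  rw [← h, Finset.sum_Ico_eq_sum_range, Fin.sum_univ_eq_sum_range fun i => w.count (i + 1)]
  simp [add_comm]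

theorem IsPlateWord.even_length {n : ℕ} {v : Fin n → ℤ} {w : List ℕ} (h : IsPlateWord n v w)
    (hv : Even (∑ i, v i)) : Even w.length := by
  rw [← Int.even_coe_nat, length_eq_sum_count h.1, Nat.cast_sum]
  simpa only [h.2.2.2] using hv

theorem IsPlateWord.revCompl {n : ℕ} {v : Fin n → ℤ} {w : List ℕ} (h : IsPlateWord n v w)
    (hv : Even (∑ i, v i)) : IsPlateWord n (fun i => v i.rev) (revCompl n w) := by
  have hlen := h.even_length hv
  have halt := h.2.1.revCompl h.1 hlen
  have hmem := mem_revCompl_bounds h.1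
  refine ⟨hmem, halt, halt.two_le_headI hmem (by rwa [length_revCompl]), fun i => ?_⟩
  rw [count_revCompl h.1, h.2.2.2]

theorem NVec_comp_rev {n : ℕ} (v : Fin n → ℤ) (hv : Even (∑ i, v i)) :
    NVec n v = NVec n fun i => v i.rev := by
  have hv' : Even (∑ i : Fin n, v i.rev) := by
    rwa [show ∑ i : Fin n, v i.rev = ∑ i, v i from Equiv.sum_comp Fin.revPerm v]
  have hback {w : List ℕ} (h : IsPlateWord n (fun i => v i.rev) w) :
      IsPlateWord n v (revCompl n w) := by
    simpa only [Fin.rev_rev] using h.revCompl hv'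
  exact Nat.card_congr
    { toFun := fun w => ⟨revCompl n w.1, IsPlateWord.revCompl w.2 hv⟩
      invFun := fun w => ⟨revCompl n w.1, hback w.2⟩
      left_inv := fun w => Subtype.ext (revCompl_revCompl w.2.1)
      right_inv := fun w => Subtype.ext (revCompl_revCompl w.2.1) }

theorem stmt7 (n : ℕ) (hn : 1 ≤ n) (v : Fin n → ℕ) (heven : Even (∑ i, v i)) :
    NVec n (fun i => (v i : ℤ)) =
      NVec n (fun i => (v ⟨n - 1 - (i : ℕ), by omega⟩ : ℤ)) := by
  rw [NVec_comp_rev _ (by exact_mod_cast heven)]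
  congr 1
  funext i
  congr 2
  ext
  simp only [Fin.val_rev]
  omega
end

section
/- (Tick Lemma) For all integers n ≥ 1 and i, j ≥ 0: N(n, i, j) = N(n−1, i−1, j) + Σ_{k ≥ 0} N(n−1, i−k, j−1−k), where the sum has only finitely many nonzero terms (all terms whose arguments contain a negative entry are 0 by convention). -/
/-- `N3 a b c` is the number of down-up alternating words over `{1,2,3}` that are
empty or have first letter `≥ 2`, containing exactly `a` ones, `b` twos and
`c` threes (it is `0` if some argument is negative). -/
noncomputable def N3 (a b c : ℤ) : ℕ :=
  Nat.card {w : List ℕ // (∀ x ∈ w, 1 ≤ x ∧ x ≤ 3) ∧ DownUpAlt w ∧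
    (w = [] ∨ 2 ≤ w.headI) ∧
    (w.count 1 : ℤ) = a ∧ (w.count 2 : ℤ) = b ∧ (w.count 3 : ℤ) = c}

theorem downUpAlt_cons_cons (x y : ℕ) (w : List ℕ) :
    DownUpAlt (x :: y :: w) ↔ y < x ∧ (w = [] ∨ y + 1 ≤ w.headI) ∧ DownUpAlt w := by
  constructor
  · intro h
    refine ⟨by simpa using h 0 (by simp), ?_, fun k hk => ?_⟩
    · cases w with
      | nil => simp
      | cons z w => simpa using h 1 (by simp)
    · simpa [Nat.add_mod_right] using h (k + 2) (by simp only [List.length_cons]; omega)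
  · rintro ⟨hxy, hw, h⟩ k hk
    match k with
    | 0 => simpa using hxy
    | 1 =>
      cases w with
      | nil => simp at hk
      | cons z w => simpa using hw
    | k + 2 => simpa [Nat.add_mod_right] using h k (by simp only [List.length_cons] at hk; omega)

/-- The down-up alternating words over `{1,2,3}` that are empty or have first letter `≥ m`,
with `a` ones, `b` twos and `c` threes. -/
def altWords (m : ℕ) (a b c : ℤ) : Set (List ℕ) :=
  {w | (∀ x ∈ w, 1 ≤ x ∧ x ≤ 3) ∧ DownUpAlt w ∧ (w = [] ∨ m ≤ w.headI) ∧
    (w.count 1 : ℤ) = a ∧ (w.count 2 : ℤ) = b ∧ (w.count 3 : ℤ) = c}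

theorem N3_eq_ncard (a b c : ℤ) : N3 a b c = (altWords 2 a b c).ncard := rfl

theorem altWords_finite (m : ℕ) (a b c : ℤ) : (altWords m a b c).Finite := by
  let l := List.replicate a.toNat 1 ++ List.replicate b.toNat 2 ++ List.replicate c.toNat 3
  refine l.permutations.toFinset.finite_toSet.subset ?_
  rintro w ⟨hw, -, -, ha, hb, hc⟩
  simp only [List.coe_toFinset, List.mem_permutations, Set.mem_ofPred_eq]
  rw [List.perm_iff_count]
  intro x
  by_cases hx : x ∈ w
  · obtain ⟨h1, h3⟩ := hw x hx
    interval_cases x <;> simp [l, List.count_replicate] <;> omega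
  · have hx' : x ∉ l := by
      intro hxl
      have h0 := List.count_eq_zero.2 hx
      simp only [l, List.mem_append, List.mem_replicate] at hxl
      rcases hxl with (⟨h, rfl⟩ | ⟨h, rfl⟩) | ⟨h, rfl⟩ <;> omega
    rw [List.count_eq_zero.2 hx, List.count_eq_zero.2 hx']

theorem altWords_eq_empty (m : ℕ) (a b : ℤ) {c : ℤ} (hc : c < 0) : altWords m a b c = ∅ := by
  ext w
  simp only [altWords, Set.mem_ofPred_eq, Set.mem_empty_iff_false, iff_false]
  omega

theorem altWords_two_eq {a : ℤ} (ha : 1 ≤ a) (b c : ℤ) :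
    altWords 2 a b c =
      (fun w => 2 :: 1 :: w) '' altWords 2 (a - 1) (b - 1) c ∪ altWords 3 a b c := by
  ext w
  rcases w with - | ⟨x, - | ⟨y, w⟩⟩
  · simp [altWords]
  · simp [altWords, List.count_cons]
    grind
  · simp [altWords, downUpAlt_cons_cons, List.count_cons]
    grind

theorem altWords_three_eq {a : ℤ} (ha : 1 ≤ a) (b c : ℤ) :
    altWords 3 a b c =
      (fun w => 3 :: 1 :: w) '' altWords 2 (a - 1) b (c - 1) ∪
        (fun w => 3 :: 2 :: w) '' altWords 3 a (b - 1) (c - 1) := by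
  ext w
  rcases w with - | ⟨x, - | ⟨y, w⟩⟩
  · simp [altWords]
    grind
  · simp [altWords, List.count_cons]
    grind
  · simp [altWords, downUpAlt_cons_cons, List.count_cons]
    grind

theorem cons_cons_injective (x y : ℕ) : Function.Injective fun w : List ℕ => x :: y :: w := by
  intro v w h
  simpa using h

theorem ncard_altWords_two {a : ℤ} (ha : 1 ≤ a) (b c : ℤ) :
    (altWords 2 a b c).ncard =
      (altWords 2 (a - 1) (b - 1) c).ncard + (altWords 3 a b c).ncard := by
  rw [altWords_two_eq ha, Set.ncard_union_eq _ ((altWords_finite ..).image _)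
    (altWords_finite ..), Set.ncard_image_of_injective _ (cons_cons_injective 2 1)]
  rw [Set.disjoint_left]
  rintro _ ⟨w, -, rfl⟩ ⟨-, -, h, -⟩
  simp at h

theorem ncard_altWords_three {a : ℤ} (ha : 1 ≤ a) (b c : ℤ) :
    (altWords 3 a b c).ncard =
      (altWords 2 (a - 1) b (c - 1)).ncard + (altWords 3 a (b - 1) (c - 1)).ncard := by
  rw [altWords_three_eq ha, Set.ncard_union_eq _ ((altWords_finite ..).image _)
    ((altWords_finite ..).image _), Set.ncard_image_of_injective _ (cons_cons_injective 3 1),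
    Set.ncard_image_of_injective _ (cons_cons_injective 3 2)]
  rw [Set.disjoint_left]
  rintro _ ⟨w, -, rfl⟩ ⟨v, -, h⟩
  simp at h

theorem ncard_altWords_three_eq_sum {a : ℤ} (ha : 1 ≤ a) (b c : ℤ) (m : ℕ) :
    (altWords 3 a b c).ncard =
      ∑ k ∈ Finset.range m, (altWords 2 (a - 1) (b - k) (c - 1 - k)).ncard +
        (altWords 3 a (b - m) (c - m)).ncard := by
  induction m with
  | zero => simp
  | succ m ih =>
    rw [ih, Finset.sum_range_succ, ncard_altWords_three ha (b - m) (c - m), add_assoc]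
    push_cast
    simp only [sub_sub, add_comm (1 : ℤ)]

theorem stmt8 (n i j : ℕ) (hn : 1 ≤ n) :
    N3 (n : ℤ) (i : ℤ) (j : ℤ) =
      N3 ((n : ℤ) - 1) ((i : ℤ) - 1) (j : ℤ) +
        ∑ᶠ k : ℕ, N3 ((n : ℤ) - 1) ((i : ℤ) - k) ((j : ℤ) - 1 - k) := by
  have ha : (1 : ℤ) ≤ n := by exact_mod_cast hn
  simp only [N3_eq_ncard]
  rw [ncard_altWords_two ha, ncard_altWords_three_eq_sum ha _ _ (j + 1),
    altWords_eq_empty 3 _ _ (c := (j : ℤ) - (j + 1 : ℕ)) (by push_cast; omega),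
    Set.ncard_empty, add_zero, finsum_eq_sum_of_support_subset]
  intro k hk
  by_contra hkj
  simp only [Finset.coe_range, Set.mem_Iio, not_lt] at hkj
  exact hk (by simp only [altWords_eq_empty 2 _ _ (c := (j : ℤ) - 1 - k) (by omega),
    Set.ncard_empty])
end

section
/- For all nonnegative integers n, i, j with |j − i| > n + 1, one has N(n, i, j) = 0; moreover, for every integer d with |d| ≤ n + 1 there exist nonnegative integers i, j with j − i = d and N(n, i, j) ≠ 0. (That is, the matrix M_n with entries N(n,i,j) has exactly 2n+3 nonzero diagonals.) -/
theorem DownUpAlt.lt {a b : ℕ} {w : List ℕ} (h : DownUpAlt (a :: b :: w)) : b < a := by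
  simpa using h 0 (by simp)

theorem DownUpAlt.tail_tail {a b : ℕ} {w : List ℕ} (h : DownUpAlt (a :: b :: w)) :
    DownUpAlt w := by
  intro k hk
  simpa using h (k + 2) (by simp only [List.length_cons]; omega)

theorem DownUpAlt.cons_cons {a b : ℕ} {w : List ℕ} (hab : b < a)
    (hw : w = [] ∨ b < w.headI) (h : DownUpAlt w) : DownUpAlt (a :: b :: w) := by
  intro k hk
  match k with
  | 0 => simpa using hab
  | 1 =>
    cases w with
    | nil => simp at hk
    | cons c w => simpa using hw
  | k + 2 => simpa using h k (by simp only [List.length_cons] at hk; omega)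

/-- In a down-up alternating word over `{1,2,3}`, the numbers of twos and threes differ by
at most one more than the number of ones. -/
theorem DownUpAlt.count_bounds : ∀ w : List ℕ, (∀ x ∈ w, 1 ≤ x ∧ x ≤ 3) → DownUpAlt w →
    w.count 3 ≤ w.count 2 + w.count 1 + 1 ∧ w.count 2 ≤ w.count 3 + w.count 1 + 1
  | [], _, _ => by simp
  | [a], _, _ => by
    simp only [List.count_cons, List.count_nil]
    constructor <;> split_ifs <;> omega
  | a :: b :: w, hx, h => by
    have ih := DownUpAlt.count_bounds w (fun x hxw => hx x (by simp [hxw])) h.tail_tail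
    have hlt := h.lt
    have ha := hx a (by simp)
    have hb := hx b (by simp)
    simp only [List.count_cons, beq_iff_eq]
    constructor <;> split_ifs <;> omega

/-- Every difference `d` with `|d| ≤ n + 1` between the numbers of threes and twos is attained
by an admissible word with `n` ones. -/
theorem exists_downUpAlt_count_sub (n : ℕ) : ∀ d : ℤ, |d| ≤ (n : ℤ) + 1 →
    ∃ w : List ℕ, (∀ x ∈ w, 1 ≤ x ∧ x ≤ 3) ∧ DownUpAlt w ∧ (w = [] ∨ 2 ≤ w.headI) ∧
      w.count 1 = n ∧ (w.count 3 : ℤ) - w.count 2 = d := by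
  induction n with
  | zero =>
    intro d hd
    obtain ⟨h₁, h₂⟩ := abs_le.mp hd
    obtain rfl | rfl | rfl : d = -1 ∨ d = 0 ∨ d = 1 := by omega
    · exact ⟨[2], by simp, by simp [DownUpAlt], by simp, by simp, by simp⟩
    · exact ⟨[], by simp, by simp [DownUpAlt], by simp, by simp, by simp⟩
    · exact ⟨[3], by simp, by simp [DownUpAlt], by simp, by simp, by simp⟩
  | succ n ih =>
    intro d hd
    obtain ⟨h₁, h₂⟩ := abs_le.mp hd
    push_cast at h₁ h₂
    rcases le_or_gt d 0 with h | h
    · obtain ⟨w, hx, hw, hh, h1, hd⟩ := ih (d + 1) (abs_le.mpr ⟨by omega, by omega⟩)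
      exact ⟨2 :: 1 :: w, by simpa using hx, hw.cons_cons (by simp) hh, by simp, by simp [h1],
        by simp; omega⟩
    · obtain ⟨w, hx, hw, hh, h1, hd⟩ := ih (d - 1) (abs_le.mpr ⟨by omega, by omega⟩)
      exact ⟨3 :: 1 :: w, by simpa using hx, hw.cons_cons (by simp) hh, by simp, by simp [h1],
        by simp; omega⟩

/-- There are finitely many words over `{1,2,3}` with the same content as a given one. -/
theorem finite_setOf_count_eq (w : List ℕ) (hw : ∀ x ∈ w, 1 ≤ x ∧ x ≤ 3) :
    {v : List ℕ | (∀ x ∈ v, 1 ≤ x ∧ x ≤ 3) ∧ v.count 1 = w.count 1 ∧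
      v.count 2 = w.count 2 ∧ v.count 3 = w.count 3}.Finite := by
  refine (List.finite_toSet w.permutations).subset ?_
  rintro v ⟨hv, h1, h2, h3⟩
  refine List.mem_permutations.mpr (List.perm_iff_count.mpr fun x => ?_)
  by_cases hx : 1 ≤ x ∧ x ≤ 3
  · obtain rfl | rfl | rfl : x = 1 ∨ x = 2 ∨ x = 3 := by omega
    · exact h1
    · exact h2
    · exact h3
  · rw [List.count_eq_zero_of_not_mem fun h => hx (hv x h),
      List.count_eq_zero_of_not_mem fun h => hx (hw x h)]

theorem stmt9 (n : ℕ) :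
    (∀ i j : ℕ, (n : ℤ) + 1 < |(j : ℤ) - (i : ℤ)| → N3 (n : ℤ) (i : ℤ) (j : ℤ) = 0) ∧
    (∀ d : ℤ, |d| ≤ (n : ℤ) + 1 →
      ∃ i j : ℕ, (j : ℤ) - (i : ℤ) = d ∧ N3 (n : ℤ) (i : ℤ) (j : ℤ) ≠ 0) := by
  refine ⟨fun i j hij => ?_, fun d hd => ?_⟩
  · have : IsEmpty {w : List ℕ // (∀ x ∈ w, 1 ≤ x ∧ x ≤ 3) ∧ DownUpAlt w ∧
        (w = [] ∨ 2 ≤ w.headI) ∧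
        (w.count 1 : ℤ) = n ∧ (w.count 2 : ℤ) = i ∧ (w.count 3 : ℤ) = j} := by
      refine ⟨fun ⟨w, hx, hw, _, h1, h2, h3⟩ => ?_⟩
      have hb := DownUpAlt.count_bounds w hx hw
      rcases lt_abs.mp hij with h | h <;> omega
    exact Nat.card_of_isEmpty
  · obtain ⟨w, hx, hw, hh, h1, hd⟩ := exists_downUpAlt_count_sub n d hd
    refine ⟨w.count 2, w.count 3, hd, ?_⟩
    refine Nat.card_ne_zero.mpr ⟨⟨w, hx, hw, hh, by rw [h1], rfl, rfl⟩, ?_⟩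
    refine ((finite_setOf_count_eq w hx).subset ?_).to_subtype
    rintro v ⟨hv, _, _, hv1, hv2, hv3⟩
    exact ⟨hv, by omega, by omega, by omega⟩
end

section
/- For all nonnegative integers n, i, j with i + j = n + 1, one has N(n, i, j) = C(n+1, i), where C denotes the binomial coefficient. -/
/-- The lists of length `n` over `{2,3}` with exactly `i` twos. -/
def peakLists : ℕ → ℕ → Finset (List ℕ)
  | 0, 0 => {[]}
  | 0, _ + 1 => ∅
  | n + 1, 0 => (peakLists n 0).image (List.cons 3)
  | n + 1, i + 1 => (peakLists n i).image (List.cons 2) ∪ (peakLists n (i + 1)).image (List.cons 3)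

lemma mem_peakLists (n i : ℕ) (l : List ℕ) :
    l ∈ peakLists n i ↔ l.length = n ∧ l.count 2 = i ∧ ∀ x ∈ l, x = 2 ∨ x = 3 := by
  induction n, i using peakLists.induct generalizing l with
  | case1 => cases l <;> simp [peakLists]
  | case2 => cases l <;> simp [peakLists]
  | case3 n ih =>
    cases l with
    | nil => simp [peakLists]
    | cons a t => simp only [peakLists, Finset.mem_image, ih, List.forall_mem_cons]; grind
  | case4 n i ih₁ ih₂ =>
    cases l with
    | nil => simp [peakLists]
    | cons a t =>
      simp only [peakLists, Finset.mem_union, Finset.mem_image, ih₁, ih₂,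
        List.forall_mem_cons]
      grind

lemma card_peakLists (n i : ℕ) : (peakLists n i).card = n.choose i := by
  induction n, i using peakLists.induct with
  | case1 => simp [peakLists]
  | case2 => simp [peakLists]
  | case3 n ih =>
    rw [peakLists, Finset.card_image_of_injective _ List.cons_injective, ih]
    simp
  | case4 n i ih₁ ih₂ =>
    rw [peakLists, Finset.card_union_of_disjoint,
      Finset.card_image_of_injective _ List.cons_injective,
      Finset.card_image_of_injective _ List.cons_injective, ih₁, ih₂, Nat.choose_succ_succ]
    simp only [Finset.disjoint_left, Finset.mem_image]
    grind

lemma downUpAlt_cons_cons_s13 (a b : ℕ) (t : List ℕ) :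
    DownUpAlt (a :: b :: t) ↔ b < a ∧ (t = [] ∨ b < t.headI) ∧ DownUpAlt t := by
  constructor
  · intro h
    refine ⟨by simpa using h 0 (by simp), ?_, fun k hk => ?_⟩
    · cases t with
      | nil => simp
      | cons c t => right; simpa using h 1 (by simp)
    · simpa using h (k + 2) (by simp only [List.length_cons]; omega)
  · rintro ⟨hab, hb, ht⟩ k hk
    match k with
    | 0 => simpa using hab
    | 1 =>
      cases t with
      | nil => simp at hk
      | cons c t => simpa using hb
    | k + 2 => simpa using ht k (by simp only [List.length_cons] at hk; omega)

/-- Every one of a reflection word is a valley, so ones fill at most half of the word. -/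
lemma two_mul_count_one_le : ∀ w : List ℕ, (∀ x ∈ w, 1 ≤ x ∧ x ≤ 3) → DownUpAlt w →
    (w = [] ∨ 2 ≤ w.headI) → 2 * w.count 1 ≤ w.length
  | [], _, _, _ => by simp
  | [a], _, _, h => by
    have : a ≠ 1 := by simp at h; omega
    simp [this]
  | a :: b :: t, hx, hw, h => by
    obtain ⟨-, hb, ht⟩ := (downUpAlt_cons_cons_s13 a b t).1 hw
    have hb1 := (hx b (by simp)).1
    have ih := two_mul_count_one_le t (fun x m => hx x (by simp [m])) ht (hb.imp_right (by omega))
    have : a ≠ 1 := by simp at h; omega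
    simp only [List.count_cons, List.length_cons, beq_iff_eq, this, if_false]
    split_ifs <;> omega

/-- If ones are one short of half of a reflection word, all valleys are ones. -/
lemma exists_intersperse_one : ∀ w : List ℕ, (∀ x ∈ w, 1 ≤ x ∧ x ≤ 3) → DownUpAlt w →
    (w = [] ∨ 2 ≤ w.headI) → w.length = 2 * w.count 1 + 1 →
    ∃ p : List ℕ, (∀ x ∈ p, x = 2 ∨ x = 3) ∧ p.intersperse 1 = w
  | [], _, _, _, hl => by simp at hl
  | [a], hx, _, h, _ => by
    refine ⟨[a], ?_, rfl⟩
    have := hx a (by simp)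
    simp at h ⊢
    omega
  | a :: b :: t, hx, hw, h, hl => by
    obtain ⟨-, hb, ht⟩ := (downUpAlt_cons_cons_s13 a b t).1 hw
    have ha3 := (hx a (by simp)).2
    have hb1 := (hx b (by simp)).1
    have hxt : ∀ x ∈ t, 1 ≤ x ∧ x ≤ 3 := fun x m => hx x (by simp [m])
    have hht : t = [] ∨ 2 ≤ t.headI := hb.imp_right (by omega)
    have hle := two_mul_count_one_le t hxt ht hht
    have ha : 2 ≤ a := by simpa using h
    have ha1 : a ≠ 1 := by omega
    simp only [List.count_cons, List.length_cons, beq_iff_eq, ha1, if_false] at hl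
    split_ifs at hl with hb'
    · subst hb'
      obtain ⟨p, hp, rfl⟩ := exists_intersperse_one t hxt ht hht (by omega)
      cases p with
      | nil => simp at hl
      | cons c p =>
        refine ⟨a :: c :: p, ?_, by simp⟩
        intro x hxm
        rcases List.mem_cons.1 hxm with rfl | hxm
        · omega
        · exact hp x hxm
    · omega

lemma intersperse_one_spec : ∀ p : List ℕ, p ≠ [] → (∀ x ∈ p, x = 2 ∨ x = 3) →
    (∀ x ∈ p.intersperse 1, 1 ≤ x ∧ x ≤ 3) ∧ DownUpAlt (p.intersperse 1) ∧
    2 ≤ (p.intersperse 1).headI ∧ (p.intersperse 1).count 1 + 1 = p.length ∧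
    (p.intersperse 1).count 2 = p.count 2 ∧ (p.intersperse 1).count 3 = p.count 3 ∧
    (p.intersperse 1).filter (· ≠ 1) = p
  | [], h, _ => absurd rfl h
  | [a], _, hp => by
    have ha : a = 2 ∨ a = 3 := hp a (by simp)
    rcases ha with rfl | rfl <;> simp [DownUpAlt]
  | a :: b :: t, _, hp => by
    obtain ⟨h₁, h₂, h₃, h₄, h₅, h₆, h₇⟩ :=
      intersperse_one_spec (b :: t) (by simp) (fun x m => hp x (List.mem_cons_of_mem _ m))
    have ha : a = 2 ∨ a = 3 := hp a (by simp)
    rw [List.intersperse_cons_cons, downUpAlt_cons_cons_s13]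
    refine ⟨?_, ⟨by omega, Or.inr (by omega), h₂⟩, ?_, ?_, ?_, ?_, ?_⟩
    · intro x hx
      simp only [List.mem_cons] at hx
      rcases hx with rfl | rfl | hx
      · omega
      · omega
      · exact h₁ x hx
    all_goals rcases ha with rfl | rfl <;> simp_all [List.count_cons]

lemma count_two_add_count_three (p : List ℕ) (hp : ∀ x ∈ p, x = 2 ∨ x = 3) :
    p.count 2 + p.count 3 = p.length := by
  induction p with
  | nil => simp
  | cons a t ih =>
    have := ih fun x m => hp x (List.mem_cons_of_mem _ m)
    rcases hp a (by simp) with rfl | rfl <;> simp <;> omega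

lemma length_eq_count_add (w : List ℕ) (hw : ∀ x ∈ w, 1 ≤ x ∧ x ≤ 3) :
    w.length = w.count 1 + w.count 2 + w.count 3 := by
  induction w with
  | nil => simp
  | cons a t ih =>
    have := ih fun x m => hw x (List.mem_cons_of_mem _ m)
    have ha := hw a (by simp)
    obtain rfl | rfl | rfl : a = 1 ∨ a = 2 ∨ a = 3 := by omega
    all_goals simp; omega

theorem stmt13 (n i j : ℕ) (h : i + j = n + 1) :
    N3 (n : ℤ) (i : ℤ) (j : ℤ) = Nat.choose (n + 1) i := by
  have ne_nil : ∀ p ∈ peakLists (n + 1) i, p ≠ [] := by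
    rintro p hp rfl
    simp [mem_peakLists] at hp
  have inj : Set.InjOn (List.intersperse 1) (peakLists (n + 1) i : Set (List ℕ)) := by
    intro p hp q hq hpq
    have filter_eq : ∀ r ∈ peakLists (n + 1) i, (r.intersperse 1).filter (· ≠ 1) = r :=
      fun r hr => (intersperse_one_spec r (ne_nil r hr)
        ((mem_peakLists _ _ r).1 hr).2.2).2.2.2.2.2.2
    rw [← filter_eq p hp, ← filter_eq q hq, hpq]
  rw [← card_peakLists, ← Finset.card_image_of_injOn inj, N3,
    ← Nat.subtype_card]
  intro w
  simp only [Finset.mem_image, Nat.cast_inj]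
  constructor
  · rintro ⟨p, hp, rfl⟩
    have hnil := ne_nil p hp
    obtain ⟨hlen, htwo, hp⟩ := (mem_peakLists _ _ p).1 hp
    obtain ⟨h₁, h₂, h₃, h₄, h₅, h₆, -⟩ := intersperse_one_spec p hnil hp
    have := count_two_add_count_three p hp
    exact ⟨h₁, h₂, Or.inr h₃, by omega, by omega, by omega⟩
  · rintro ⟨h₁, h₂, h₃, hone, htwo, hthree⟩
    have hlen := length_eq_count_add w h₁
    obtain ⟨p, hp, rfl⟩ := exists_intersperse_one w h₁ h₂ h₃ (by omega)
    have hnil : p ≠ [] := by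
      rintro rfl
      simp at htwo hthree
      omega
    obtain ⟨-, -, -, h₄, h₅, -, -⟩ := intersperse_one_spec p hnil hp
    exact ⟨p, (mem_peakLists _ _ p).2 ⟨by omega, by omega, hp⟩, rfl⟩
end

section
/- Fix an integer n ≥ 0 and an integer d with −n ≤ d ≤ n+1. Let s = n if d ≡ n (mod 2) and s = n+1 otherwise, and let k = ⌊(n+d)/2⌋. Define f : ℕ → ℕ by f(m) = N(n, (s−d)/2 + m, (s+d)/2 + m). Then for every integer j with 0 ≤ j ≤ k, the j-th forward difference of f at 0 satisfies (Δ^j f)(0) = f(0) · C(k, j), where C denotes the binomial coefficient. (The leading terms of the successive difference sequences of each diagonal of M_n are in binomial-coefficient ratio.) -/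
/-- Forward difference of an integer sequence. -/
def fdiff (f : ℕ → ℤ) : ℕ → ℤ := fun m => f (m + 1) - f m

/-- `Zigzag up p w`: the letters of `p :: w` alternately rise and fall, the first step being a
rise if `up` is true and a fall otherwise. -/
def Zigzag : Bool → ℕ → List ℕ → Prop
  | _, _, [] => True
  | true, p, x :: w => p < x ∧ Zigzag false x w
  | false, p, x :: w => x < p ∧ Zigzag true x w

theorem zigzag_iff_getD (up : Bool) (p : ℕ) (w : List ℕ) :
    Zigzag up p w ↔ ∀ k : ℕ, k + 1 < (p :: w).length →
      if (k + up.toNat) % 2 = 0 then (p :: w).getD (k + 1) 0 < (p :: w).getD k 0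
      else (p :: w).getD k 0 < (p :: w).getD (k + 1) 0 := by
  induction w generalizing up p with
  | nil => simp [Zigzag]
  | cons x w ih =>
    rw [← Nat.and_forall_add_one]
    cases up
    · rw [Zigzag, ih]
      refine and_congr (by simp) (forall_congr' fun k => ?_)
      simp
    · rw [Zigzag, ih]
      refine and_congr (by simp) (forall_congr' fun k => ?_)
      simp [add_assoc]

theorem downUpAlt_and_head_iff_zigzag (w : List ℕ) :
    (DownUpAlt w ∧ (w = [] ∨ 2 ≤ w.headI)) ↔ Zigzag true 1 w := by
  cases w with
  | nil => simp [DownUpAlt, Zigzag]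
  | cons x w =>
    rw [Zigzag, zigzag_iff_getD, and_comm]
    refine and_congr ?_ ?_
    · simp [Nat.succ_le_iff]
    · simp [DownUpAlt]

/-- Words over `{1,2,3}` with `n` ones, `i` twos and `j` threes that continue the letter `p`
in a zigzag fashion. -/
def zigzagWords (up : Bool) (p n i j : ℕ) : Set (List ℕ) :=
  {w | (∀ x ∈ w, 1 ≤ x ∧ x ≤ 3) ∧ Zigzag up p w ∧
    w.count 1 = n ∧ w.count 2 = i ∧ w.count 3 = j}

theorem finite_zigzagWords (up : Bool) (p n i j : ℕ) : (zigzagWords up p n i j).Finite := by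
  refine ((Multiset.replicate n 1 + Multiset.replicate i 2 +
    Multiset.replicate j 3).lists.finite_toSet).subset ?_
  rintro w ⟨hw, -, rfl, rfl, rfl⟩
  rw [Set.mem_ofPred_eq, Multiset.mem_lists_iff]
  ext x
  by_cases hx : x ∈ w
  · obtain ⟨h1, h3⟩ := hw x hx
    interval_cases x <;> simp [Multiset.count_replicate]
  · have := List.count_eq_zero_of_not_mem hx
    simp only [Multiset.count_add, Multiset.count_replicate, Multiset.quot_mk_to_coe,
      Multiset.coe_count]
    grind

/-- The number of words in `zigzagWords up p n i j`. -/
noncomputable def zigzagCount (up : Bool) (p n i j : ℕ) : ℕ := (zigzagWords up p n i j).ncard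

open Classical in
theorem ncard_eq_sum_ncard_cons {S : Set (List ℕ)} (hS : S.Finite)
    (h : ∀ w ∈ S, ∀ x ∈ w, 1 ≤ x ∧ x ≤ 3) :
    S.ncard = (if [] ∈ S then 1 else 0) + {w | 1 :: w ∈ S}.ncard + {w | 2 :: w ∈ S}.ncard +
      {w | 3 :: w ∈ S}.ncard := by
  have hinj (x : ℕ) : Function.Injective (List.cons x) := List.cons_injective
  have hfin (x : ℕ) : {w | x :: w ∈ S}.Finite := hS.preimage (hinj x).injOn
  have hempty : (if [] ∈ S then 1 else 0) = {w : List ℕ | w = [] ∧ w ∈ S}.ncard := by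
    split_ifs with h0
    · rw [show {w : List ℕ | w = [] ∧ w ∈ S} = {[]} by ext; simp +contextual [h0]]
      simp
    · rw [show {w : List ℕ | w = [] ∧ w ∈ S} = ∅ by ext; simp +contextual [h0]]
      simp
  have hunion : S = {w : List ℕ | w = [] ∧ w ∈ S} ∪ List.cons 1 '' {w | 1 :: w ∈ S} ∪
      List.cons 2 '' {w | 2 :: w ∈ S} ∪ List.cons 3 '' {w | 3 :: w ∈ S} := by
    ext w
    cases w with
    | nil => simp
    | cons x w =>
      constructor
      · intro hw
        obtain ⟨h1, h3⟩ := h _ hw x (by simp)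
        interval_cases x <;> simp [hw]
      · simp only [Set.mem_union, Set.mem_image, Set.mem_ofPred_eq, List.cons.injEq]
        grind
  have hfin0 : {w : List ℕ | w = [] ∧ w ∈ S}.Finite := hS.subset fun w hw => hw.2
  have hd1 : Disjoint {w : List ℕ | w = [] ∧ w ∈ S} (List.cons 1 '' {w | 1 :: w ∈ S}) := by
    rw [Set.disjoint_left]; rintro _ ⟨rfl, -⟩ ⟨v, -, hv⟩; simp at hv
  have hd2 : Disjoint ({w : List ℕ | w = [] ∧ w ∈ S} ∪ List.cons 1 '' {w | 1 :: w ∈ S})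
      (List.cons 2 '' {w | 2 :: w ∈ S}) := by
    rw [Set.disjoint_left]; rintro _ (⟨rfl, -⟩ | ⟨u, -, rfl⟩) ⟨v, -, hv⟩ <;> simp at hv
  have hd3 : Disjoint ({w : List ℕ | w = [] ∧ w ∈ S} ∪ List.cons 1 '' {w | 1 :: w ∈ S} ∪
      List.cons 2 '' {w | 2 :: w ∈ S}) (List.cons 3 '' {w | 3 :: w ∈ S}) := by
    rw [Set.disjoint_left]
    rintro _ ((⟨rfl, -⟩ | ⟨u, -, rfl⟩) | ⟨u, -, rfl⟩) ⟨v, -, hv⟩ <;> simp at hv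
  have f1 := (hfin 1).image (List.cons 1)
  have f2 := (hfin 2).image (List.cons 2)
  have f3 := (hfin 3).image (List.cons 3)
  conv_lhs => rw [hunion]
  rw [Set.ncard_union_eq hd3 ((hfin0.union f1).union f2) f3,
    Set.ncard_union_eq hd2 (hfin0.union f1) f2, Set.ncard_union_eq hd1 hfin0 f1,
    Set.ncard_image_of_injective _ (hinj 1), Set.ncard_image_of_injective _ (hinj 2),
    Set.ncard_image_of_injective _ (hinj 3), hempty]

theorem ncard_cons_one (up : Bool) (p n i j : ℕ) :
    {w | 1 :: w ∈ zigzagWords up p n i j}.ncard =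
      if (if up then p < 1 else 1 < p) ∧ 0 < n then zigzagCount (!up) 1 (n - 1) i j else 0 := by
  by_cases h : (if up then p < 1 else 1 < p) ∧ 0 < n
  · rw [if_pos h, zigzagCount]; congr 1; ext w
    cases up <;> simp [zigzagWords, Zigzag] at h ⊢ <;> grind
  · rw [if_neg h]
    convert Set.ncard_empty (List ℕ)
    ext w
    cases up <;> simp [zigzagWords, Zigzag] at h ⊢ <;> grind

theorem ncard_cons_two (up : Bool) (p n i j : ℕ) :
    {w | 2 :: w ∈ zigzagWords up p n i j}.ncard =
      if (if up then p < 2 else 2 < p) ∧ 0 < i then zigzagCount (!up) 2 n (i - 1) j else 0 := by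
  by_cases h : (if up then p < 2 else 2 < p) ∧ 0 < i
  · rw [if_pos h, zigzagCount]; congr 1; ext w
    cases up <;> simp [zigzagWords, Zigzag] at h ⊢ <;> grind
  · rw [if_neg h]
    convert Set.ncard_empty (List ℕ)
    ext w
    cases up <;> simp [zigzagWords, Zigzag] at h ⊢ <;> grind

theorem ncard_cons_three (up : Bool) (p n i j : ℕ) :
    {w | 3 :: w ∈ zigzagWords up p n i j}.ncard =
      if (if up then p < 3 else 3 < p) ∧ 0 < j then zigzagCount (!up) 3 n i (j - 1) else 0 := by
  by_cases h : (if up then p < 3 else 3 < p) ∧ 0 < j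
  · rw [if_pos h, zigzagCount]; congr 1; ext w
    cases up <;> simp [zigzagWords, Zigzag] at h ⊢ <;> grind
  · rw [if_neg h]
    convert Set.ncard_empty (List ℕ)
    ext w
    cases up <;> simp [zigzagWords, Zigzag] at h ⊢ <;> grind

/-- Recursion on the first letter. -/
theorem zigzagCount_eq (up : Bool) (p n i j : ℕ) :
    zigzagCount up p n i j = (if n = 0 ∧ i = 0 ∧ j = 0 then 1 else 0) +
      (if (if up then p < 1 else 1 < p) ∧ 0 < n then zigzagCount (!up) 1 (n - 1) i j else 0) +
      (if (if up then p < 2 else 2 < p) ∧ 0 < i then zigzagCount (!up) 2 n (i - 1) j else 0) +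
      (if (if up then p < 3 else 3 < p) ∧ 0 < j then zigzagCount (!up) 3 n i (j - 1) else 0) := by
  rw [← ncard_cons_one, ← ncard_cons_two, ← ncard_cons_three]
  rw [zigzagCount, ncard_eq_sum_ncard_cons (finite_zigzagWords up p n i j) fun w hw => hw.1]
  congr 3
  simp [zigzagWords, Zigzag, eq_comm]

/-- Rises from `2` must go to `3`, which is followed by nothing, by `1`, or by `2`. -/
theorem zigzagCount_up_two (n i j : ℕ) :
    zigzagCount true 2 n i j = (if n = 0 ∧ i = 0 ∧ j ≤ 1 then 1 else 0) +
      (if 0 < n ∧ 0 < j then zigzagCount true 1 (n - 1) i (j - 1) else 0) +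
      (if 0 < i ∧ 0 < j then zigzagCount true 2 n (i - 1) (j - 1) else 0) := by
  rw [zigzagCount_eq]
  simp only [Bool.not_true]
  rw [zigzagCount_eq false 3]
  simp only [Bool.not_false]
  grind

/-- Rises from `1` either are rises from `2`, or go to `2`, which is followed by nothing
or by `1`. -/
theorem zigzagCount_up_one (n i j : ℕ) :
    zigzagCount true 1 n i j = zigzagCount true 2 n i j +
      (if n = 0 ∧ i = 1 ∧ j = 0 then 1 else 0) +
      (if 0 < n ∧ 0 < i then zigzagCount true 1 (n - 1) (i - 1) j else 0) := by
  rw [zigzagCount_eq true 1, zigzagCount_eq true 2]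
  simp only [Bool.not_true]
  rw [zigzagCount_eq false 2]
  simp only [Bool.not_false]
  grind

theorem zigzagCount_up_eq_zero (n i j : ℕ) :
    ((n + 1 < i - j ∨ n + 1 < j - i ∨ i + j < n) → zigzagCount true 1 n i j = 0) ∧
    (((0 < i - j ∧ n ≤ i - j) ∨ n + 1 < j - i ∨ i + j < n) → zigzagCount true 2 n i j = 0) := by
  induction n generalizing i j with
  | zero =>
    have key : (0 < i - j ∨ 1 < j - i) → zigzagCount true 2 0 i j = 0 := by
      induction i generalizing j with
      | zero => intro h; rw [zigzagCount_up_two]; grind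
      | succ i ih =>
        intro h
        rw [zigzagCount_up_two]
        have := ih (j - 1)
        grind
    refine ⟨fun h => ?_, fun h => key (by omega)⟩
    rw [zigzagCount_up_one, key (by omega)]
    grind
  | succ n ihn =>
    have key : (n + 1 ≤ i - j ∨ n + 1 + 1 < j - i ∨ i + j < n + 1) →
        zigzagCount true 2 (n + 1) i j = 0 := by
      induction i generalizing j with
      | zero =>
        intro h
        have := (ihn 0 (j - 1)).1
        rw [zigzagCount_up_two]
        grind
      | succ i ih =>
        intro h
        rw [zigzagCount_up_two]
        have := ih (j - 1)
        have := (ihn (i + 1) (j - 1)).1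
        grind
    refine ⟨fun h => ?_, fun h => key (by omega)⟩
    rw [zigzagCount_up_one, key (by omega)]
    have := (ihn (i - 1) j).1
    grind

theorem zigzagCount_up_formula (n a b m : ℕ) (h : a + b = n ∨ a + b = n + 1) :
    zigzagCount true 1 n (a + m) (b + m) = (a + b).choose a * (n + 1 - a).multichoose m ∧
    zigzagCount true 2 n (a + m) (b + m) =
      (a + b - 1).choose a * (n + 1 - a).multichoose m := by
  induction n generalizing a b m with
  | zero =>
    have key : zigzagCount true 2 0 (a + m) (b + m) =
        (a + b - 1).choose a * (0 + 1 - a).multichoose m := by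
      obtain ⟨rfl, rfl⟩ | ⟨rfl, rfl⟩ | ⟨rfl, rfl⟩ :
          (a = 0 ∧ b = 0) ∨ (a = 0 ∧ b = 1) ∨ (a = 1 ∧ b = 0) := by omega
      · induction m with
        | zero => rw [zigzagCount_up_two]; simp
        | succ m ih => rw [zigzagCount_up_two]; simp at ih ⊢; exact ih
      · induction m with
        | zero => rw [zigzagCount_up_two]; simp
        | succ m ih => rw [zigzagCount_up_two]; simp [add_comm 1] at ih ⊢; exact ih
      · rw [(zigzagCount_up_eq_zero _ _ _).2 (by omega)]; simp
    refine ⟨?_, key⟩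
    rw [zigzagCount_up_one, key]
    obtain ⟨rfl, rfl⟩ | ⟨rfl, rfl⟩ | ⟨rfl, rfl⟩ :
      (a = 0 ∧ b = 0) ∨ (a = 0 ∧ b = 1) ∨ (a = 1 ∧ b = 0) := by omega
    · cases m <;> simp
    · simp
    · cases m <;> simp
  | succ n ih =>
    have key : zigzagCount true 2 (n + 1) (a + m) (b + m) =
        (a + b - 1).choose a * (n + 1 + 1 - a).multichoose m := by
      obtain rfl | ⟨b, rfl⟩ : b = 0 ∨ ∃ c, b = c + 1 := by cases b <;> simp
      · rw [(zigzagCount_up_eq_zero _ _ _).2 (by omega),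
          Nat.choose_eq_zero_of_lt (by omega), zero_mul]
      have hn : n + 1 + 1 - a = n + 1 - a + 1 := by omega
      induction m with
      | zero =>
        have h1 := (ih a b 0 (by omega)).1
        have h2 : 0 < a → zigzagCount true 2 (n + 1) (a - 1) b = 0 := fun ha =>
          (zigzagCount_up_eq_zero _ _ _).2 (by omega)
        rw [zigzagCount_up_two]
        simp at h1 h2 ⊢
        grind
      | succ m ihm =>
        have h1 := (ih a b (m + 1) (by omega)).1
        rw [zigzagCount_up_two, hn, Nat.multichoose_succ_succ]
        have e1 : b + 1 + (m + 1) - 1 = b + (m + 1) := by omega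
        have e2 : a + (m + 1) - 1 = a + m := by omega
        have e3 : b + (m + 1) = b + 1 + m := by omega
        rw [if_neg (by omega), if_pos (by omega), if_pos (by omega), e1, e2,
          Nat.add_sub_cancel, h1, e3, ihm, hn]
        simp only [← add_assoc, Nat.add_sub_cancel]
        ring
    refine ⟨?_, key⟩
    rw [zigzagCount_up_one, key, if_neg (by omega)]
    obtain rfl | ⟨a, rfl⟩ : a = 0 ∨ ∃ c, a = c + 1 := by cases a <;> simp
    · have h0 : 0 < m → zigzagCount true 1 n (m - 1) (b + m) = 0 := fun hm =>
        (zigzagCount_up_eq_zero _ _ _).1 (by omega)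
      simp at h0 ⊢
      exact h0
    · have h1 := (ih a b m (by omega)).1
      have e1 : a + 1 + m - 1 = a + m := by omega
      have e2 : n + 1 + 1 - (a + 1) = n + 1 - a := by omega
      have e3 : a + 1 + b - 1 = a + b := by omega
      have e4 : a + 1 + b = a + b + 1 := by omega
      rw [if_pos (by omega), e1, e2, e3, Nat.add_sub_cancel, h1, e4, Nat.choose_succ_succ]
      ring

theorem N3_natCast (n i j : ℕ) : N3 n i j = zigzagCount true 1 n i j := by
  rw [N3, zigzagCount, ← Nat.card_coe_set_eq]
  refine Nat.card_congr (Equiv.subtypeEquivRight fun w => ?_)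
  simp only [zigzagWords, Nat.cast_inj, ← downUpAlt_and_head_iff_zigzag]
  exact and_congr_right fun _ => and_assoc.symm

theorem fdiff_iterate_mul_choose (c : ℤ) (q k j : ℕ) (hj : j ≤ k) :
    fdiff^[j] (fun m => c * ((m + q).choose k : ℤ)) =
      fun m => c * ((m + q).choose (k - j) : ℤ) := by
  induction j with
  | zero => rfl
  | succ j ih =>
    rw [Function.iterate_succ_apply', ih (by omega)]
    funext m
    obtain ⟨l, rfl⟩ : ∃ l, k = l + j + 1 := ⟨k - j - 1, by omega⟩
    have e1 : l + j + 1 - j = l + 1 := by omega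
    have e2 : l + j + 1 - (j + 1) = l := by omega
    rw [e1, e2, fdiff, add_right_comm, Nat.choose_succ_succ]
    push_cast
    ring

theorem stmt15 (n : ℕ) (d : ℤ) (hd1 : -(n : ℤ) ≤ d) (hd2 : d ≤ (n : ℤ) + 1) :
    let s : ℤ := if (2 : ℤ) ∣ (d - n) then (n : ℤ) else (n : ℤ) + 1
    let k : ℕ := (((n : ℤ) + d) / 2).toNat
    let f : ℕ → ℤ := fun m : ℕ => (N3 (n : ℤ) ((s - d) / 2 + m) ((s + d) / 2 + m) : ℤ)
    ∀ j : ℕ, j ≤ k → fdiff^[j] f 0 = f 0 * (Nat.choose k j : ℤ) := by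
  intro s k f j hj
  obtain ⟨a, b, ha, hb, hab, hk⟩ : ∃ a b : ℕ, (s - d) / 2 = a ∧ (s + d) / 2 = b ∧
      (a + b = n ∨ a + b = n + 1) ∧ n = a + k := by
    refine ⟨((s - d) / 2).toNat, ((s + d) / 2).toNat, ?_⟩
    simp only [s, k]
    split_ifs <;> omega
  have hf : f = fun m => ((a + b).choose a : ℤ) * ((m + k).choose k : ℤ) := by
    funext m
    have e : n + 1 - a = k + 1 := by omega
    have h := N3_natCast n (a + m) (b + m)
    rw [(zigzagCount_up_formula n a b m hab).1, e, Nat.multichoose_eq,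
      show k + 1 + m - 1 = m + k by omega, Nat.choose_symm_add (a := m)] at h
    simp only [f, ha, hb]
    exact_mod_cast h
  rw [hf, fdiff_iterate_mul_choose _ _ _ _ hj]
  simp [Nat.choose_symm hj]
end
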